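/- Let u ∈ W^{1,1}(Ω) for a bounded open set Ω ⊂ ℝ^N, let Φ ∈ C_c^∞(Ω × ℝ), θ ∈ L^∞(ℝ), and e a unit vector in ℝ^N. Then ∫_Ω θ(u(x)) Φ(x, u(x)) ∂_e u(x) dx = −∫_ℝ θ(t) (∫_{\{u ≥ t\}} ∂_e Φ(x,t) dx) dt, where ∂_e denotes the directional derivative in direction e. -/

import Mathlib

open MeasureTheory Set
open Filter Topology ContinuousLinearMap
open scoped ENNReal Convolution

section Mollification

variable {E : Type*} [NormedAddCommGroup E] [NormedSpace ℝ E] [FiniteDimensional ℝ E]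
  [MeasurableSpace E] [BorelSpace E] {μ : Measure E} [μ.IsAddHaarMeasure]

/-- Translations are continuous in `L¹`. -/
theorem tendsto_lintegral_enorm_comp_sub_sub {f : E → ℝ} (hf : Integrable f μ) :
    Tendsto (fun y => ∫⁻ x, ‖f (x - y) - f x‖ₑ ∂μ) (𝓝 0) (𝓝 0) := by
  have hf1 : MemLp f 1 μ := memLp_one_iff_integrable.2 hf
  let F : Lp ℝ 1 μ := hf1.toLp f
  let T : E → C(E, E) := fun y => ⟨fun x => x - y, by fun_prop⟩
  have hT : Continuous T := ContinuousMap.continuous_of_continuous_uncurry _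
    (by simp only [T, Function.uncurry_def, ContinuousMap.coe_mk]; fun_prop)
  have hTm (y : E) : MeasurePreserving (T y) μ μ := measurePreserving_sub_right μ y
  have h := ((continuous_const (y := F)).compMeasurePreservingLp hT hTm
    ENNReal.one_ne_top).tendsto 0
  rw [tendsto_iff_edist_tendsto_0] at h
  refine h.congr fun y => ?_
  rw [Lp.edist_def, eLpNorm_one_eq_lintegral_enorm]
  refine lintegral_congr_ae ?_
  have h0 (z : E) : Lp.compMeasurePreserving (T z) (hTm z) F =ᵐ[μ] fun x => f (x - z) :=
    (Lp.coeFn_compMeasurePreserving F (hTm z)).trans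
      ((hTm z).quasiMeasurePreserving.ae_eq_comp hf1.coeFn_toLp)
  filter_upwards [h0 y, h0 0] with x hx hx'
  rw [Pi.sub_apply, hx, hx', sub_zero]

theorem convolutionExists_normed (φ : ContDiffBump (0 : E)) {f : E → ℝ} (hf : Integrable f μ) :
    ConvolutionExists (φ.normed μ) f (lsmul ℝ ℝ) μ :=
  φ.hasCompactSupport_normed.convolutionExists_left _ φ.continuous_normed hf.locallyIntegrable

theorem contDiff_normed_convolution (φ : ContDiffBump (0 : E)) {f : E → ℝ}
    (hf : Integrable f μ) : ContDiff ℝ (⊤ : ℕ∞) (φ.normed μ ⋆[lsmul ℝ ℝ, μ] f) :=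
  φ.hasCompactSupport_normed.contDiff_convolution_left _ φ.contDiff_normed hf.locallyIntegrable

theorem integrable_normed_convolution (φ : ContDiffBump (0 : E)) {f : E → ℝ}
    (hf : Integrable f μ) : Integrable (φ.normed μ ⋆[lsmul ℝ ℝ, μ] f) μ :=
  φ.integrable_normed.integrable_convolution _ hf

theorem lintegral_enorm_normed_convolution_sub_le (φ : ContDiffBump (0 : E)) {f : E → ℝ}
    (hf : Integrable f μ) {ε : ℝ≥0∞}
    (hε : ∀ y ∈ Metric.ball (0 : E) φ.rOut, ∫⁻ x, ‖f (x - y) - f x‖ₑ ∂μ ≤ ε) :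
    ∫⁻ x, ‖(φ.normed μ ⋆[lsmul ℝ ℝ, μ] f) x - f x‖ₑ ∂μ ≤ ε := by
  have hpt (x : E) : ‖(φ.normed μ ⋆[lsmul ℝ ℝ, μ] f) x - f x‖ₑ
      ≤ ∫⁻ y, ‖φ.normed μ y‖ₑ * ‖f (x - y) - f x‖ₑ ∂μ := by
    have : (φ.normed μ ⋆[lsmul ℝ ℝ, μ] f) x - f x
        = ∫ y, φ.normed μ y * (f (x - y) - f x) ∂μ := by
      have h1 : Integrable (fun y => φ.normed μ y * f (x - y)) μ := convolutionExists_normed φ hf x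
      have h2 : Integrable (fun y => φ.normed μ y * f x) μ := φ.integrable_normed.mul_const _
      simp only [mul_sub]
      rw [integral_sub h1 h2, integral_mul_const, φ.integral_normed, one_mul]
      rfl
    rw [this]
    refine (enorm_integral_le_lintegral_enorm _).trans_eq ?_
    simp only [enorm_mul]
  have hm : AEMeasurable (fun p : E × E => ‖φ.normed μ p.2‖ₑ * ‖f (p.1 - p.2) - f p.1‖ₑ)
      (μ.prod μ) := by
    refine AEMeasurable.mul ?_ (AEMeasurable.enorm (AEMeasurable.sub ?_ ?_))
    · exact (φ.continuous_normed.measurable.comp measurable_snd).enorm.aemeasurable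
    · exact hf.1.aemeasurable.comp_quasiMeasurePreserving
        (quasiMeasurePreserving_sub_of_right_invariant μ μ)
    · exact hf.1.aemeasurable.comp_quasiMeasurePreserving Measure.quasiMeasurePreserving_fst
  calc ∫⁻ x, ‖(φ.normed μ ⋆[lsmul ℝ ℝ, μ] f) x - f x‖ₑ ∂μ
      ≤ ∫⁻ x, ∫⁻ y, ‖φ.normed μ y‖ₑ * ‖f (x - y) - f x‖ₑ ∂μ ∂μ := lintegral_mono hpt
    _ = ∫⁻ y, ∫⁻ x, ‖φ.normed μ y‖ₑ * ‖f (x - y) - f x‖ₑ ∂μ ∂μ := lintegral_lintegral_swap hm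
    _ ≤ ∫⁻ y, ‖φ.normed μ y‖ₑ * ε ∂μ := by
      refine lintegral_mono fun y => ?_
      rw [lintegral_const_mul' _ _ enorm_ne_top]
      by_cases hy : y ∈ Metric.ball (0 : E) φ.rOut
      · gcongr; exact hε y hy
      · rw [← φ.support_normed_eq (μ := μ), Function.notMem_support] at hy
        simp [hy]
    _ = ε := by
      rw [lintegral_mul_const _ φ.continuous_normed.measurable.enorm,
        ← ofReal_integral_norm_eq_lintegral_enorm φ.integrable_normed]
      simp only [Real.norm_of_nonneg (φ.nonneg_normed _), φ.integral_normed, ENNReal.ofReal_one,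
        one_mul]

/-- Mollifications of an integrable function converge to it in `L¹`. -/
theorem tendsto_lintegral_enorm_normed_convolution_sub {ι : Type*} {l : Filter ι}
    {φ : ι → ContDiffBump (0 : E)} (hφ : Tendsto (fun i => (φ i).rOut) l (𝓝 0)) {f : E → ℝ}
    (hf : Integrable f μ) :
    Tendsto (fun i => ∫⁻ x, ‖((φ i).normed μ ⋆[lsmul ℝ ℝ, μ] f) x - f x‖ₑ ∂μ) l (𝓝 0) := by
  rw [ENNReal.tendsto_nhds_zero]
  intro ε hε
  obtain ⟨δ, hδ, h⟩ := Metric.eventually_nhds_iff_ball.1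
    (ENNReal.tendsto_nhds_zero.1 (tendsto_lintegral_enorm_comp_sub_sub hf) ε hε)
  filter_upwards [hφ.eventually (gt_mem_nhds hδ)] with i hi
  exact lintegral_enorm_normed_convolution_sub_le (φ i) hf fun y hy =>
    h y (Metric.ball_subset_ball hi.le hy)

/-- Convolution with a test function commutes with the weak derivative in direction `e`, away
from the boundary. -/
theorem fderiv_convolution_of_weak {Ω : Set E} {u g ρ : E → ℝ} {e x : E}
    (hu : Integrable u μ)
    (hweak : ∀ φ : E → ℝ, ContDiff ℝ (⊤ : ℕ∞) φ → HasCompactSupport φ → tsupport φ ⊆ Ω →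
      ∫ x, u x * fderiv ℝ φ x e ∂μ = -∫ x, g x * φ x ∂μ)
    (hcd : ContDiff ℝ (⊤ : ℕ∞) ρ) (hcs : HasCompactSupport ρ)
    (hx : tsupport (fun t => ρ (x - t)) ⊆ Ω) :
    fderiv ℝ (ρ ⋆[lsmul ℝ ℝ, μ] u) x e = (ρ ⋆[lsmul ℝ ℝ, μ] g) x := by
  have hcd1 : ContDiff ℝ 1 ρ := hcd.of_le (by exact_mod_cast le_top)
  let L : ℝ →L[ℝ] ℝ →L[ℝ] ℝ := lsmul ℝ ℝ
  have hex : Integrable (fun t => L.precompL E (fderiv ℝ ρ (x - t)) (u t)) μ := by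
    have h : ConvolutionExistsAt (fderiv ℝ ρ) u x (L.precompL E) μ :=
      (hcs.fderiv ℝ).convolutionExists_left (L.precompL E)
        (hcd1.continuous_fderiv one_ne_zero) hu.locallyIntegrable x
    exact h.integrable_swap
  have hd (t : E) : fderiv ℝ (fun t => ρ (x - t)) t e = -(fderiv ℝ ρ (x - t) e) := by
    have h1 : HasFDerivAt (fun t : E => x - t) (-(ContinuousLinearMap.id ℝ E)) t :=
      (hasFDerivAt_id t).const_sub x
    have h2 := ((hcd1.differentiable one_ne_zero (x - t)).hasFDerivAt).comp t h1
    rw [show (fun t => ρ (x - t)) = ρ ∘ fun t => x - t from rfl, h2.fderiv]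
    simp
  have key := hweak (fun t => ρ (x - t)) (hcd.comp (contDiff_const.sub contDiff_id))
    (hcs.comp_homeomorph (Homeomorph.subLeft x)) hx
  rw [(hcs.hasFDerivAt_convolution_left (lsmul ℝ ℝ) hcd1 hu.locallyIntegrable x).fderiv,
    convolution_eq_swap, integral_apply hex, convolution_eq_swap]
  simp only [hd, mul_neg, integral_neg, neg_inj] at key
  simp only [precompL_apply, L, lsmul_apply, smul_eq_mul]
  simpa only [mul_comm] using key

theorem fderiv_normed_convolution_of_weak {Ω : Set E} {u g : E → ℝ} {e : E}
    (hu : Integrable u μ)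
    (hweak : ∀ φ : E → ℝ, ContDiff ℝ (⊤ : ℕ∞) φ → HasCompactSupport φ → tsupport φ ⊆ Ω →
      ∫ x, u x * fderiv ℝ φ x e ∂μ = -∫ x, g x * φ x ∂μ)
    (φ : ContDiffBump (0 : E)) {x : E} (hx : Metric.closedBall x φ.rOut ⊆ Ω) :
    fderiv ℝ (φ.normed μ ⋆[lsmul ℝ ℝ, μ] u) x e = (φ.normed μ ⋆[lsmul ℝ ℝ, μ] g) x := by
  refine fderiv_convolution_of_weak hu hweak φ.contDiff_normed φ.hasCompactSupport_normed
    (Subset.trans (closure_minimal (fun t ht => ?_) Metric.isClosed_closedBall) hx)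
  have : x - t ∈ Function.support (φ.normed μ) := ht
  rw [φ.support_normed_eq, mem_ball_zero_iff] at this
  rw [Metric.mem_closedBall, dist_comm, dist_eq_norm]
  exact this.le

end Mollification

section Graph

variable {E : Type*} [NormedAddCommGroup E] [NormedSpace ℝ E]

theorem fderiv_eq_zero_of_fst_notMem {Ψ : E × ℝ → ℝ} {x : E}
    (hx : x ∉ Prod.fst '' tsupport Ψ) (t : ℝ) : fderiv ℝ Ψ (x, t) = 0 :=
  fderiv_of_notMem_tsupport ℝ fun h => hx ⟨_, h, rfl⟩

theorem fderiv_comp_graph {Ψ : E × ℝ → ℝ} (hΨ : ContDiff ℝ 1 Ψ) {v : E → ℝ}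
    (hv : ContDiff ℝ 1 v) (x e : E) :
    fderiv ℝ (fun x => Ψ (x, v x)) x e = fderiv ℝ Ψ (x, v x) (e, fderiv ℝ v x e) := by
  have h1 : HasFDerivAt (fun x => (x, v x)) ((ContinuousLinearMap.id ℝ E).prod (fderiv ℝ v x)) x :=
    (hasFDerivAt_id x).prodMk (hv.differentiable one_ne_zero x).hasFDerivAt
  have h2 : HasFDerivAt (fun x => Ψ (x, v x)) _ x :=
    ((hΨ.differentiable one_ne_zero (x, v x)).hasFDerivAt).comp x h1
  rw [h2.fderiv]
  simp

end Graph

section ChainRule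

variable {E : Type*} [NormedAddCommGroup E] [NormedSpace ℝ E] [FiniteDimensional ℝ E]
  [MeasurableSpace E] [BorelSpace E] {μ : Measure E} [μ.IsAddHaarMeasure]

/-- The integral of a directional derivative of a compactly supported `C¹` function vanishes. -/
theorem integral_fderiv_apply_eq_zero {w : E → ℝ} (hw : ContDiff ℝ 1 w)
    (hc : HasCompactSupport w) (e : E) : ∫ x, fderiv ℝ w x e ∂μ = 0 := by
  have hi : Integrable (fun x => fderiv ℝ w x e) μ :=
    ((hw.continuous_fderiv one_ne_zero).clm_apply continuous_const).integrable_of_hasCompactSupport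
      (hc.fderiv_apply ℝ e)
  have := integral_mul_fderiv_eq_neg_fderiv_mul_of_integrable (μ := μ) (f := fun _ : E => (1 : ℝ))
    (g := w) (v := e) (by simp) (by simpa using hi)
    (by simpa using hw.continuous.integrable_of_hasCompactSupport hc)
    (fun _ _ => differentiableAt_const _) (fun x _ => hw.differentiable one_ne_zero x)
  simpa using this

theorem integral_fderiv_comp_graph_eq_zero {Ψ : E × ℝ → ℝ} (hΨ : ContDiff ℝ 1 Ψ)
    (hc : HasCompactSupport Ψ) {v : E → ℝ} (hv : ContDiff ℝ 1 v) (e : E) :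
    ∫ x, fderiv ℝ Ψ (x, v x) (e, fderiv ℝ v x e) ∂μ = 0 := by
  have hcw : HasCompactSupport (fun x => Ψ (x, v x)) :=
    HasCompactSupport.intro (hc.isCompact.image continuous_fst) fun x hx =>
      image_eq_zero_of_notMem_tsupport fun h => hx ⟨_, h, rfl⟩
  simp only [← fderiv_comp_graph hΨ hv]
  exact integral_fderiv_apply_eq_zero (hΨ.comp (contDiff_id.prodMk hv)) hcw e

/-- The divergence theorem for `x ↦ Ψ (x, u x)`, where `u` has weak derivative `g` in
direction `e` on the open set `Ω`. -/
theorem integral_fderiv_comp_graph_of_weak {Ω : Set E} (hΩ : IsOpen Ω) {u g : E → ℝ} {e : E}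
    (hu : Integrable u μ) (hg : Integrable g μ)
    (hweak : ∀ φ : E → ℝ, ContDiff ℝ (⊤ : ℕ∞) φ → HasCompactSupport φ → tsupport φ ⊆ Ω →
      ∫ x, u x * fderiv ℝ φ x e ∂μ = -∫ x, g x * φ x ∂μ)
    {Ψ : E × ℝ → ℝ} (hΨ : ContDiff ℝ 1 Ψ) (hc : HasCompactSupport Ψ)
    (hΨΩ : Prod.fst '' tsupport Ψ ⊆ Ω) :
    ∫ x, fderiv ℝ Ψ (x, u x) (e, g x) ∂μ = 0 := by
  set K : Set E := Prod.fst '' tsupport Ψ with hK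
  have hKc : IsCompact K := hc.isCompact.image continuous_fst
  obtain ⟨δ, hδ, hδΩ⟩ := hKc.exists_cthickening_subset_open hΩ hΨΩ
  obtain ⟨C, hC⟩ := (hc.fderiv ℝ).exists_bound_of_continuous (hΨ.continuous_fderiv one_ne_zero)
  have hC0 : 0 ≤ C := (norm_nonneg _).trans (hC 0)
  let φ : ℕ → ContDiffBump (0 : E) := fun n =>
    ⟨1 / ((n : ℝ) + 1), 2 * (1 / ((n : ℝ) + 1)), by positivity,
      by have : 0 < 1 / ((n : ℝ) + 1) := by positivity
         linarith⟩
  have hφ : Tendsto (fun n => (φ n).rOut) atTop (𝓝 0) := by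
    simpa [φ] using (tendsto_one_div_add_atTop_nhds_zero_nat (𝕜 := ℝ)).const_mul 2
  let v : ℕ → E → ℝ := fun n => (φ n).normed μ ⋆[lsmul ℝ ℝ, μ] u
  let w : ℕ → E → ℝ := fun n => (φ n).normed μ ⋆[lsmul ℝ ℝ, μ] g
  have hv (n : ℕ) : ContDiff ℝ 1 (v n) :=
    (contDiff_normed_convolution (φ n) hu).of_le (by exact_mod_cast le_top)
  have hw (n : ℕ) : Integrable (w n) μ := integrable_normed_convolution (φ n) hg
  have hvu : ∀ᵐ x ∂μ, Tendsto (fun n => v n x) atTop (𝓝 (u x)) :=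
    ContDiffBump.ae_convolution_tendsto_right_of_locallyIntegrable hφ (K := 2)
      (Eventually.of_forall fun n => le_rfl) hu.locallyIntegrable
  have hzero : ∀ᶠ n in atTop, ∫ x, fderiv ℝ Ψ (x, v n x) (e, w n x) ∂μ = 0 := by
    filter_upwards [hφ.eventually (gt_mem_nhds hδ)] with n hn
    rw [← integral_fderiv_comp_graph_eq_zero (μ := μ) hΨ hc (hv n) e]
    congr 1 with x
    by_cases hx : x ∈ K
    · rw [fderiv_normed_convolution_of_weak hu hweak (φ n)]
      exact ((Metric.closedBall_subset_closedBall hn.le).trans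
        (Metric.closedBall_subset_cthickening hx δ)).trans hδΩ
    · simp [fderiv_eq_zero_of_fst_notMem hx]
  have hcont : Continuous fun p : (E × ℝ) × ℝ => fderiv ℝ Ψ p.1 (e, p.2) :=
    ((hΨ.continuous_fderiv one_ne_zero).comp continuous_fst).clm_apply
      (continuous_const.prodMk continuous_snd)
  have hmeas {a b : E → ℝ} (ha : AEStronglyMeasurable a μ) (hb : AEStronglyMeasurable b μ) :
      AEStronglyMeasurable (fun x => fderiv ℝ Ψ (x, a x) (e, b x)) μ :=
    hcont.comp_aestronglyMeasurable ((aestronglyMeasurable_id.prodMk ha).prodMk hb)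
  have hbd (a b : E → ℝ) (x : E) :
      ‖fderiv ℝ Ψ (x, a x) (e, b x)‖ ≤ K.indicator (fun _ => C * ‖e‖) x + C * ‖b x‖ := by
    by_cases hx : x ∈ K
    · rw [indicator_of_mem hx]
      calc _ ≤ C * ‖(e, b x)‖ := le_of_opNorm_le _ (hC _) _
        _ ≤ C * (‖e‖ + ‖b x‖) := by
          gcongr
          exact max_le (by simp) (by simp)
        _ = _ := mul_add _ _ _
    · rw [fderiv_eq_zero_of_fst_notMem hx]
      simp only [zero_apply, norm_zero, indicator_of_notMem hx, zero_add]
      positivity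
  have hbi {b : E → ℝ} (hb : Integrable b μ) :
      Integrable (fun x => K.indicator (fun _ => C * ‖e‖) x + C * ‖b x‖) μ :=
    ((integrable_indicator_iff hKc.measurableSet).2
      (integrableOn_const hKc.measure_lt_top.ne)).add (hb.norm.const_mul C)
  have hint {a b : E → ℝ} (ha : AEStronglyMeasurable a μ) (hb : Integrable b μ) :
      Integrable (fun x => fderiv ℝ Ψ (x, a x) (e, b x)) μ :=
    (hbi hb).mono' (hmeas ha hb.1) (Eventually.of_forall (hbd a b))
  have hvm (n : ℕ) : AEStronglyMeasurable (v n) μ := (hv n).continuous.aestronglyMeasurable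
  have h1 : Tendsto (fun n => ∫ x, fderiv ℝ Ψ (x, v n x) (e, g x) ∂μ) atTop
      (𝓝 (∫ x, fderiv ℝ Ψ (x, u x) (e, g x) ∂μ)) := by
    refine tendsto_integral_of_dominated_convergence _ (fun n => hmeas (hvm n) hg.1) (hbi hg)
      (fun n => Eventually.of_forall (hbd (v n) g)) ?_
    filter_upwards [hvu] with x hx
    exact (hcont.tendsto ((x, u x), g x)).comp
      ((tendsto_const_nhds.prodMk_nhds hx).prodMk_nhds tendsto_const_nhds)
  have h2 : Tendsto (fun n => ∫ x, fderiv ℝ Ψ (x, v n x) (e, w n x) ∂μ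
      - ∫ x, fderiv ℝ Ψ (x, v n x) (e, g x) ∂μ) atTop (𝓝 0) := by
    rw [tendsto_zero_iff_enorm_tendsto_zero]
    have hlim := ENNReal.Tendsto.const_mul (a := ENNReal.ofReal C)
      (tendsto_lintegral_enorm_normed_convolution_sub hφ hg) (Or.inr ENNReal.ofReal_ne_top)
    rw [mul_zero] at hlim
    refine tendsto_of_tendsto_of_tendsto_of_le_of_le tendsto_const_nhds hlim
      (fun _ => zero_le) fun n => ?_
    rw [← integral_sub (hint (hvm n) (hw n)) (hint (hvm n) hg),
      ← lintegral_const_mul' _ _ ENNReal.ofReal_ne_top]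
    refine (enorm_integral_le_lintegral_enorm _).trans (lintegral_mono fun x => ?_)
    rw [← map_sub, Prod.mk_sub_mk, sub_self, ← ofReal_norm, ← ofReal_norm, ← ENNReal.ofReal_mul hC0]
    refine ENNReal.ofReal_le_ofReal ((le_of_opNorm_le _ (hC _) _).trans_eq ?_)
    rw [Prod.norm_mk, norm_zero, max_eq_right (norm_nonneg _)]
  have h3 := (h2.congr' (hzero.mono fun n hn => by rw [hn, zero_sub])).neg
  simp only [neg_neg, neg_zero] at h3
  exact tendsto_nhds_unique h1 h3

end ChainRule

section Layers

theorem measurePreserving_vertical_shear {E : Type*} [MeasurableSpace E]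
    {μ : Measure E} [SFinite μ] {u : E → ℝ} (hu : Measurable u) :
    MeasurePreserving (fun p : E × ℝ => (p.1, u p.1 + p.2)) (μ.prod volume) (μ.prod volume) :=
  (MeasurePreserving.id μ).skew_product (g := fun x s => u x + s) (by fun_prop)
    (Eventually.of_forall fun x => (measurePreserving_add_left volume (u x)).map_eq)

theorem integral_Iic_fderiv_vertical {E : Type*} [NormedAddCommGroup E] [NormedSpace ℝ E]
    {Φ : E × ℝ → ℝ} (hΦ : ContDiff ℝ 1 Φ)
    (hc : HasCompactSupport Φ) (x : E) (a : ℝ) :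
    ∫ s in Iic (0 : ℝ), fderiv ℝ Φ (x, a + s) (0, 1) = Φ (x, a) := by
  have hd (s : ℝ) : HasDerivAt (fun s => Φ (x, a + s)) (fderiv ℝ Φ (x, a + s) (0, 1)) s := by
    have h1 : HasDerivAt (fun s : ℝ => (x, a + s)) ((0 : E), (1 : ℝ)) s :=
      (hasDerivAt_const s x).prodMk ((hasDerivAt_id s).const_add a)
    exact ((hΦ.differentiable one_ne_zero (x, a + s)).hasFDerivAt).comp_hasDerivAt s h1
  have hcs : HasCompactSupport (fun s => Φ (x, a + s)) :=
    HasCompactSupport.intro ((hc.isCompact.image continuous_snd).image (continuous_sub_right a))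
      fun s hs => image_eq_zero_of_notMem_tsupport fun h => hs ⟨a + s, ⟨_, h, rfl⟩, by simp⟩
  have hcd : ContDiff ℝ 1 (fun s => Φ (x, a + s)) :=
    hΦ.comp (contDiff_const.prodMk (contDiff_const.add contDiff_id))
  simpa [(hd _).deriv] using hcs.integral_Iic_deriv_eq hcd 0

theorem integrable_prod_mul_of_hasCompactSupport {E : Type*} [NormedAddCommGroup E]
    [MeasurableSpace E] [BorelSpace E] [SecondCountableTopology E] {μ : Measure E} [SFinite μ]
    {q : E × ℝ → ℝ} (hq : Continuous q) (hc : HasCompactSupport q) {g : E → ℝ} (hg : Integrable g μ) :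
    Integrable (fun p : E × ℝ => q p * g p.1) (μ.prod volume) := by
  obtain ⟨C, hC⟩ := hc.exists_bound_of_continuous hq
  have hJ : IsCompact (Prod.snd '' tsupport q) := hc.isCompact.image continuous_snd
  have hb : Integrable (fun p : E × ℝ => ‖g p.1‖ * (Prod.snd '' tsupport q).indicator
      (fun _ => C) p.2) (μ.prod volume) :=
    hg.norm.mul_prod ((integrable_indicator_iff hJ.measurableSet).2
      (integrableOn_const hJ.measure_lt_top.ne))
  refine hb.mono' (hq.aestronglyMeasurable.mul hg.1.comp_fst) (Eventually.of_forall fun p => ?_)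
  rw [norm_mul, mul_comm]
  by_cases hp : p ∈ tsupport q
  · rw [indicator_of_mem (mem_image_of_mem _ hp)]
    gcongr
    exact hC p
  · rw [image_eq_zero_of_notMem_tsupport hp, norm_zero, mul_zero]
    exact mul_nonneg (norm_nonneg _) (indicator_nonneg (fun _ _ => (norm_nonneg _).trans (hC p)) _)

variable {E : Type*} [NormedAddCommGroup E] [NormedSpace ℝ E] [FiniteDimensional ℝ E]
  [MeasurableSpace E] [BorelSpace E] {μ : Measure E} [μ.IsAddHaarMeasure]

/-- Layer-cake form of the divergence theorem: `∫ Φ(x, u) ∂ₑu` in terms of the subgraph of `u`. -/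
theorem integral_comp_graph_mul_weak_deriv {Ω : Set E} (hΩ : IsOpen Ω) {u g : E → ℝ} {e : E}
    (hum : Measurable u) (hu : Integrable u μ) (hg : Integrable g μ)
    (hweak : ∀ φ : E → ℝ, ContDiff ℝ (⊤ : ℕ∞) φ → HasCompactSupport φ → tsupport φ ⊆ Ω →
      ∫ x, u x * fderiv ℝ φ x e ∂μ = -∫ x, g x * φ x ∂μ)
    {Φ : E × ℝ → ℝ} (hΦ : ContDiff ℝ 1 Φ) (hc : HasCompactSupport Φ)
    (hΦΩ : Prod.fst '' tsupport Φ ⊆ Ω) :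
    ∫ x, Φ (x, u x) * g x ∂μ
      = -∫ p in {p : E × ℝ | p.2 ≤ u p.1}, fderiv ℝ Φ p (e, 0) ∂(μ.prod volume) := by
  let S : E × ℝ → E × ℝ := fun p => (p.1, u p.1 + p.2)
  have hS : MeasurePreserving S (μ.prod volume) (μ.prod volume) :=
    measurePreserving_vertical_shear hum
  have hk (v : E × ℝ) : Continuous (fun p => fderiv ℝ Φ p v) :=
    (hΦ.continuous_fderiv one_ne_zero).clm_apply continuous_const
  have hkc (v : E × ℝ) : HasCompactSupport (fun p => fderiv ℝ Φ p v) := hc.fderiv_apply ℝ v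
  have hA : Integrable (fun p => fderiv ℝ Φ (S p) (e, 0)) (μ.prod volume) :=
    hS.integrable_comp_of_integrable ((hk (e, 0)).integrable_of_hasCompactSupport (hkc (e, 0)))
  have hB : Integrable (fun p => fderiv ℝ Φ (S p) (0, 1) * g p.1) (μ.prod volume) :=
    hS.integrable_comp_of_integrable
      (integrable_prod_mul_of_hasCompactSupport (hk (0, 1)) (hkc (0, 1)) hg)
  have hle : μ.prod (volume.restrict (Iic (0 : ℝ))) ≤ μ.prod volume :=
    Measure.prod_mono le_rfl Measure.restrict_le_self
  have hA' := hA.mono_measure hle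
  have hB' := hB.mono_measure hle
  have hsum : (∫ p, fderiv ℝ Φ (S p) (e, 0) ∂(μ.prod (volume.restrict (Iic (0 : ℝ)))))
      + ∫ p, fderiv ℝ Φ (S p) (0, 1) * g p.1 ∂(μ.prod (volume.restrict (Iic (0 : ℝ)))) = 0 := by
    rw [← integral_add' hA' hB', integral_prod_symm _ (hA'.add hB')]
    refine integral_eq_zero_of_ae (Eventually.of_forall fun s => ?_)
    have hts : tsupport (fun p : E × ℝ => Φ (p + (0, s)))
        = (Homeomorph.addRight ((0 : E), s)) ⁻¹' tsupport Φ :=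
      tsupport_comp_eq_preimage Φ (Homeomorph.addRight ((0 : E), s))
    have h := integral_fderiv_comp_graph_of_weak hΩ hu hg hweak
      (Ψ := fun p => Φ (p + (0, s))) (hΦ.comp (contDiff_id.add contDiff_const))
      (hc.comp_homeomorph (Homeomorph.addRight ((0 : E), s))) (by
        rintro _ ⟨p, hp, rfl⟩
        rw [hts] at hp
        exact hΦΩ ⟨_, hp, by simp⟩)
    simp only [fderiv_comp_add_right] at h
    refine Eq.trans (integral_congr_ae (Eventually.of_forall fun x => ?_)) h
    dsimp only
    rw [show ((e, g x) : E × ℝ) = (e, 0) + g x • (0, 1) by simp, map_add, map_smul]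
    simp [S, mul_comm]
  have h1 : ∫ p, fderiv ℝ Φ (S p) (e, 0) ∂(μ.prod (volume.restrict (Iic (0 : ℝ))))
      = ∫ p in {p : E × ℝ | p.2 ≤ u p.1}, fderiv ℝ Φ p (e, 0) ∂(μ.prod volume) := by
    have hT : MeasurableSet {p : E × ℝ | p.2 ≤ u p.1} :=
      measurableSet_le measurable_snd (hum.comp measurable_fst)
    conv_rhs => rw [← hS.map_eq]
    rw [setIntegral_map hT (hk _).aestronglyMeasurable hS.aemeasurable]
    rw [← Measure.restrict_univ (μ := μ), Measure.prod_restrict, Measure.restrict_univ]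
    congr 2
    ext p
    simp [S]
  have h2 : ∫ p, fderiv ℝ Φ (S p) (0, 1) * g p.1 ∂(μ.prod (volume.restrict (Iic (0 : ℝ))))
      = ∫ x, Φ (x, u x) * g x ∂μ := by
    rw [integral_prod _ hB']
    simp only [integral_mul_const, S, integral_Iic_fderiv_vertical hΦ hc]
  linarith

end Layers

section Density

theorem enorm_integral_comp_mul_sub_le {α : Type*} [MeasurableSpace α] {μ : Measure α} {a : α → ℝ}
    (ha : Measurable a) {h : α → ℝ} (hh : Integrable h μ) {θ η : ℝ → ℝ} (hθ : Measurable θ)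
    (hη : Measurable η) (hθi : Integrable (fun x => θ (a x) * h x) μ)
    (hηi : Integrable (fun x => η (a x) * h x) μ) :
    ‖(∫ x, θ (a x) * h x ∂μ) - ∫ x, η (a x) * h x ∂μ‖ₑ
      ≤ ∫⁻ t, ‖θ t - η t‖ₑ ∂((μ.withDensity fun x => ‖h x‖ₑ).map a) := by
  have hm : Measurable fun t => ‖θ t - η t‖ₑ := (hθ.sub hη).enorm
  rw [← integral_sub hθi hηi, lintegral_map hm ha,
    lintegral_withDensity_eq_lintegral_mul₀ hh.1.enorm
      (g := fun x => ‖θ (a x) - η (a x)‖ₑ) (hm.comp ha).aemeasurable]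
  refine (enorm_integral_le_lintegral_enorm _).trans_eq (lintegral_congr fun x => ?_)
  rw [← sub_mul, enorm_mul, mul_comm]
  rfl

theorem integrable_comp_mul_of_bounded {α : Type*} [MeasurableSpace α] {μ : Measure α} {a : α → ℝ}
    (ha : Measurable a) {h : α → ℝ} (hh : Integrable h μ) {θ : ℝ → ℝ} (hθ : Measurable θ)
    (hθb : ∃ K, ∀ t, |θ t| ≤ K) : Integrable (fun x => θ (a x) * h x) μ := by
  obtain ⟨K, hK⟩ := hθb
  exact hh.bdd_mul (hθ.comp ha).aestronglyMeasurable (c := K) (Eventually.of_forall fun x => hK _)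

/-- Two push-forwards of integrable densities that agree on test functions agree on bounded
measurable functions. -/
theorem integral_comp_mul_eq_of_forall_contDiff {α β : Type*} [MeasurableSpace α]
    [MeasurableSpace β] {μ : Measure α} {ν : Measure β} {a : α → ℝ} {b : β → ℝ}
    (ha : Measurable a) (hb : Measurable b) {h : α → ℝ} {k : β → ℝ} (hh : Integrable h μ)
    (hk : Integrable k ν)
    (H : ∀ η : ℝ → ℝ, ContDiff ℝ (⊤ : ℕ∞) η → HasCompactSupport η →
      ∫ x, η (a x) * h x ∂μ = ∫ y, η (b y) * k y ∂ν)
    {θ : ℝ → ℝ} (hθ : Measurable θ) (hθb : ∃ K, ∀ t, |θ t| ≤ K) :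
    ∫ x, θ (a x) * h x ∂μ = ∫ y, θ (b y) * k y ∂ν := by
  set m₁ := (μ.withDensity fun x => ‖h x‖ₑ).map a with hm₁
  set m₂ := (ν.withDensity fun y => ‖k y‖ₑ).map b with hm₂
  have : IsFiniteMeasure (μ.withDensity fun x => ‖h x‖ₑ) :=
    isFiniteMeasure_withDensity hh.2.ne
  have : IsFiniteMeasure (ν.withDensity fun y => ‖k y‖ₑ) :=
    isFiniteMeasure_withDensity hk.2.ne
  have : IsFiniteMeasure (m₁ + m₂) := inferInstance
  have hθ1 : MemLp θ 1 (m₁ + m₂) := by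
    obtain ⟨K, hK⟩ := hθb
    exact MemLp.of_bound hθ.aestronglyMeasurable K (Eventually.of_forall hK)
  rw [← sub_eq_zero, ← enorm_eq_zero]
  refine le_antisymm (ENNReal.le_of_forall_pos_le_add fun ε hε _ => ?_) zero_le
  obtain ⟨η, hηc, hηs, hη⟩ := hθ1.exist_eLpNorm_sub_le ENNReal.one_ne_top le_rfl
    (NNReal.coe_pos.2 hε)
  rw [eLpNorm_one_eq_lintegral_enorm, lintegral_add_measure, ENNReal.ofReal_coe_nnreal] at hη
  have hηm : Measurable η := hηs.continuous.measurable
  have hηb : ∃ K, ∀ t, |η t| ≤ K := hηc.exists_bound_of_continuous hηs.continuous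
  have h1 := enorm_integral_comp_mul_sub_le ha hh hθ hηm
    (integrable_comp_mul_of_bounded ha hh hθ hθb) (integrable_comp_mul_of_bounded ha hh hηm hηb)
  have h2 := enorm_integral_comp_mul_sub_le hb hk hθ hηm
    (integrable_comp_mul_of_bounded hb hk hθ hθb) (integrable_comp_mul_of_bounded hb hk hηm hηb)
  rw [H η hηs hηc] at h1
  calc _ = ‖(∫ x, θ (a x) * h x ∂μ - ∫ y, η (b y) * k y ∂ν)
        - (∫ y, θ (b y) * k y ∂ν - ∫ y, η (b y) * k y ∂ν)‖ₑ := by rw [sub_sub_sub_cancel_right]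
    _ ≤ _ := enorm_sub_le
    _ ≤ _ := (add_le_add h1 h2).trans hη
    _ = 0 + ε := (zero_add _).symm

end Density

section Bounded

theorem fderiv_mul_comp_snd_apply {E : Type*} [NormedAddCommGroup E] [NormedSpace ℝ E]
    {Φ : E × ℝ → ℝ} {η : ℝ → ℝ} (p : E × ℝ) (hΦ : DifferentiableAt ℝ Φ p)
    (hη : DifferentiableAt ℝ η p.2) (e : E) :
    fderiv ℝ (fun p => η p.2 * Φ p) p (e, 0) = η p.2 * fderiv ℝ Φ p (e, 0) := by
  have h1 : HasFDerivAt (fun p : E × ℝ => η p.2) _ p := hη.hasFDerivAt.comp p hasFDerivAt_snd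
  have h2 : HasFDerivAt (fun p : E × ℝ => η p.2 * Φ p) _ p := h1.mul hΦ.hasFDerivAt
  rw [h2.fderiv]
  simp

variable {E : Type*} [NormedAddCommGroup E] [NormedSpace ℝ E] [FiniteDimensional ℝ E]
  [MeasurableSpace E] [BorelSpace E] {μ : Measure E} [μ.IsAddHaarMeasure]

theorem integral_bounded_comp_graph_mul_weak_deriv {Ω : Set E} (hΩ : IsOpen Ω) {u g : E → ℝ}
    {e : E} (hum : Measurable u) (hu : Integrable u μ) (hg : Integrable g μ)
    (hweak : ∀ φ : E → ℝ, ContDiff ℝ (⊤ : ℕ∞) φ → HasCompactSupport φ → tsupport φ ⊆ Ω →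
      ∫ x, u x * fderiv ℝ φ x e ∂μ = -∫ x, g x * φ x ∂μ)
    {Φ : E × ℝ → ℝ} (hΦ : ContDiff ℝ 1 Φ) (hc : HasCompactSupport Φ)
    (hΦΩ : Prod.fst '' tsupport Φ ⊆ Ω) {θ : ℝ → ℝ} (hθ : Measurable θ)
    (hθb : ∃ K, ∀ t, |θ t| ≤ K) :
    ∫ x, θ (u x) * Φ (x, u x) * g x ∂μ
      = -∫ t, θ t * ∫ x in {x | t ≤ u x}, fderiv ℝ Φ (x, t) (e, 0) ∂μ := by
  have hT : MeasurableSet {p : E × ℝ | p.2 ≤ u p.1} :=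
    measurableSet_le measurable_snd (hum.comp measurable_fst)
  have hk : Integrable (fun p => fderiv ℝ Φ p (e, 0)) (μ.prod volume) :=
    ((hΦ.continuous_fderiv one_ne_zero).clm_apply
      continuous_const).integrable_of_hasCompactSupport (hc.fderiv_apply ℝ _)
  have hkT : Integrable (fun p => -fderiv ℝ Φ p (e, 0))
      ((μ.prod volume).restrict {p | p.2 ≤ u p.1}) := hk.neg.integrableOn
  obtain ⟨C, hC⟩ := hc.exists_bound_of_continuous hΦ.continuous
  have hh : Integrable (fun x => Φ (x, u x) * g x) μ :=
    hg.bdd_mul (hΦ.continuous.measurable.comp (measurable_id.prodMk hum)).aestronglyMeasurable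
      (c := C) (Eventually.of_forall fun x => hC _)
  have key := integral_comp_mul_eq_of_forall_contDiff hum measurable_snd hh hkT (fun η hη _ => by
    have hη1 : ContDiff ℝ 1 η := hη.of_le (by exact_mod_cast le_top)
    have hsub : tsupport (fun p : E × ℝ => η p.2 * Φ p) ⊆ tsupport Φ := tsupport_mul_subset_right
    have h := integral_comp_graph_mul_weak_deriv hΩ hum hu hg hweak
      (Φ := fun p => η p.2 * Φ p) ((hη1.comp contDiff_snd).mul hΦ) hc.mul_left
      ((image_mono hsub).trans hΦΩ)
    have hd (p : E × ℝ) := fderiv_mul_comp_snd_apply p (hΦ.differentiable one_ne_zero p)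
      (hη1.differentiable one_ne_zero p.2) e
    simp only [hd] at h
    simpa only [mul_assoc, mul_neg, integral_neg] using h) hθ hθb
  simp only [mul_assoc]
  rw [key]
  have hθk := integrable_comp_mul_of_bounded (measurable_snd (α := E)) hk hθ hθb
  simp only [mul_neg, integral_neg]
  rw [← integral_indicator hT, integral_prod_symm _ (hθk.indicator hT)]
  congr 2 with t
  rw [← integral_const_mul, ← integral_indicator (measurableSet_le measurable_const hum)]
  rfl

end Bounded

/-- For `u ∈ W^{1,1}(Ω)` (with weak directional derivative `g = ∂_e u`
in direction the unit vector `e`, expressed by integration by parts against test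
functions), `Φ ∈ C_c^∞(Ω × ℝ)` and bounded measurable `θ`, one has
`∫_Ω θ(u) Φ(x,u) ∂_e u dx = −∫_ℝ θ(t) ∫_{u ≥ t} ∂_e Φ(x,t) dx dt`. -/
theorem stmt7 {N : ℕ}
    (Ω : Set (EuclideanSpace ℝ (Fin N))) (hΩo : IsOpen Ω) (hΩb : Bornology.IsBounded Ω)
    (u g : EuclideanSpace ℝ (Fin N) → ℝ)
    (e : EuclideanSpace ℝ (Fin N)) (he : ‖e‖ = 1)
    (hu_int : IntegrableOn u Ω) (hg_int : IntegrableOn g Ω)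
    (hweak : ∀ φ : EuclideanSpace ℝ (Fin N) → ℝ, ContDiff ℝ (⊤ : ℕ∞) φ → HasCompactSupport φ →
      tsupport φ ⊆ Ω →
      ∫ x in Ω, u x * fderiv ℝ φ x e = -∫ x in Ω, g x * φ x)
    (Φ : EuclideanSpace ℝ (Fin N) × ℝ → ℝ)
    (hΦ_smooth : ContDiff ℝ (⊤ : ℕ∞) Φ) (hΦ_supp : HasCompactSupport Φ)
    (hΦ_in : tsupport Φ ⊆ Ω ×ˢ (univ : Set ℝ))
    (θ : ℝ → ℝ) (hθm : Measurable θ) (hθb : ∃ K, ∀ t, |θ t| ≤ K) :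
    ∫ x in Ω, θ (u x) * Φ (x, u x) * g x
      = -∫ t : ℝ, θ t * ∫ x in {x ∈ Ω | t ≤ u x}, fderiv ℝ Φ (x, t) (e, 0) := by
  have hΩm := hΩo.measurableSet
  have hΦΩ : Prod.fst '' tsupport Φ ⊆ Ω := by
    rintro _ ⟨p, hp, rfl⟩
    exact (hΦ_in hp).1
  let U := Ω.indicator (hu_int.1.mk u)
  have hUu : ∀ᵐ x, x ∈ Ω → U x = u x := by
    filter_upwards [(ae_restrict_iff' hΩm).1 hu_int.1.ae_eq_mk] with x hx hxΩ
    rw [hx hxΩ]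
    exact indicator_of_mem hxΩ _
  have hUm : Measurable U := hu_int.1.stronglyMeasurable_mk.measurable.indicator hΩm
  have hU : Integrable U :=
    (integrable_indicator_iff hΩm).2 (hu_int.congr_fun_ae hu_int.1.ae_eq_mk)
  have hG : Integrable (Ω.indicator g) := (integrable_indicator_iff hΩm).2 hg_int
  have hweak' : ∀ φ : EuclideanSpace ℝ (Fin N) → ℝ, ContDiff ℝ (⊤ : ℕ∞) φ →
      HasCompactSupport φ → tsupport φ ⊆ Ω →
      ∫ x, U x * fderiv ℝ φ x e = -∫ x, Ω.indicator g x * φ x := by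
    intro φ h1 h2 h3
    have hl : ∫ x, U x * fderiv ℝ φ x e = ∫ x in Ω, u x * fderiv ℝ φ x e := by
      rw [← integral_indicator hΩm]
      refine integral_congr_ae ?_
      filter_upwards [hUu] with x hx
      by_cases hxΩ : x ∈ Ω
      · rw [hx hxΩ, indicator_of_mem hxΩ]
      · simp [U, hxΩ]
    have hr : ∫ x, Ω.indicator g x * φ x = ∫ x in Ω, g x * φ x := by
      simp only [← integral_indicator hΩm, indicator_mul_left]
    rw [hl, hr, hweak φ h1 h2 h3]
  have key := integral_bounded_comp_graph_mul_weak_deriv hΩo hUm hU hG hweak'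
    (hΦ_smooth.of_le (by exact_mod_cast le_top)) hΦ_supp hΦΩ hθm hθb
  have hL : ∫ x in Ω, θ (u x) * Φ (x, u x) * g x
      = ∫ x, θ (U x) * Φ (x, U x) * Ω.indicator g x := by
    rw [← integral_indicator hΩm]
    refine integral_congr_ae ?_
    filter_upwards [hUu] with x hx
    by_cases hxΩ : x ∈ Ω
    · rw [hx hxΩ, indicator_of_mem hxΩ, indicator_of_mem hxΩ]
    · simp [hxΩ]
  rw [hL, key]
  congr 2 with t
  congr 1
  have hset : ({x ∈ Ω | t ≤ u x} : Set _) =ᵐ[volume] {x ∈ Ω | t ≤ U x} := by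
    filter_upwards [hUu] with x hx
    refine propext (and_congr_right fun hxΩ => ?_)
    rw [hx hxΩ]
  rw [setIntegral_congr_set hset]
  refine setIntegral_eq_of_subset_of_forall_sdiff_eq_zero
    (measurableSet_le measurable_const hUm) (fun x hx => hx.2) fun x hx => ?_
  have hxΩ : x ∉ Ω := fun h => hx.2 ⟨h, hx.1⟩
  rw [fderiv_eq_zero_of_fst_notMem fun h => hxΩ (hΦΩ h), zero_apply]
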